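/- Let E ∈ K^{m×σ}, M ∈ K^{σ×σ}, s ∈ ℕ^m, and let P_1 ∈ K[X]^{m×m} be s-reduced and such that every row of P_1 is an interpolant for (E,M). Then P_1 is an interpolation basis for (E,M) if and only if the multiset of s-row degrees of P_1 equals {s_1+δ_1,…,s_m+δ_m}, where (δ_1,…,δ_m) is the s-minimal degree of (E,M). -/

import Mathlib

open Polynomial Matrix

/-- Priority comparison on pairs `(c,d)`: lexicographic on `(s_c + d, c)`. -/
def keyLt {m : ℕ} (s : Fin m → ℕ) (x y : Fin m × ℕ) : Prop :=
  s x.1 + x.2 < s y.1 + y.2 ∨ (s x.1 + x.2 = s y.1 + y.2 ∧ x.1 < y.1)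

/-- Row `(c,d)` of the priority-permuted Krylov matrix is a linear combination of the
earlier rows. -/
def DepEarlier {K : Type*} [Field K] {m σ : ℕ} (E : Matrix (Fin m) (Fin σ) K)
    (M : Matrix (Fin σ) (Fin σ) K) (s : Fin m → ℕ) (δ : ℕ) (c : Fin m) (d : ℕ) : Prop :=
  Matrix.vecMul (E c) (M ^ d) ∈
    Submodule.span K
      ((fun y : Fin m × ℕ => Matrix.vecMul (E y.1) (M ^ y.2)) ''
        {y | y.2 ≤ δ ∧ keyLt s y (c, d)})

/-- `dm` is the `s`-minimal degree of `(E,M)`. -/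
def IsMinDeg {K : Type*} [Field K] {m σ : ℕ} (E : Matrix (Fin m) (Fin σ) K)
    (M : Matrix (Fin σ) (Fin σ) K) (s : Fin m → ℕ) (δ : ℕ) (dm : Fin m → ℕ) : Prop :=
  ∀ c, DepEarlier E M s δ c (dm c) ∧ ∀ d, d < dm c → ¬ DepEarlier E M s δ c d

/-- The `s`-row degree of row `i` of `P`. -/
noncomputable def rowDegW {K : Type*} [Field K] {k m : ℕ} (s : Fin m → ℕ)
    (P : Matrix (Fin k) (Fin m) (Polynomial K)) (i : Fin k) : WithBot ℕ :=
  Finset.univ.sup fun j => (P i j).degree + (s j : WithBot ℕ)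

/-- The `s`-leading matrix of `P`. -/
noncomputable def leadMat {K : Type*} [Field K] {k m : ℕ} (s : Fin m → ℕ)
    (P : Matrix (Fin k) (Fin m) (Polynomial K)) : Matrix (Fin k) (Fin m) K :=
  fun i j =>
    if (P i j).degree + (s j : WithBot ℕ) = rowDegW s P i then (P i j).leadingCoeff else 0

/-- `P` is `s`-reduced. -/
def IsReducedS {K : Type*} [Field K] {k m : ℕ} (s : Fin m → ℕ)
    (P : Matrix (Fin k) (Fin m) (Polynomial K)) : Prop :=
  (leadMat s P).rank = k

/-- `p` is an interpolant for `(E,M)`. -/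
def IsInterpolant {K : Type*} [Field K] {m σ : ℕ} (E : Matrix (Fin m) (Fin σ) K)
    (M : Matrix (Fin σ) (Fin σ) K) (p : Fin m → Polynomial K) : Prop :=
  ∑ c, Matrix.vecMul (E c) (Polynomial.aeval M (p c)) = 0

/-- The rows of `P` form a basis of the `K[X]`-module of interpolants for `(E,M)`. -/
def IsInterpBasis {K : Type*} [Field K] {m σ : ℕ} (E : Matrix (Fin m) (Fin σ) K)
    (M : Matrix (Fin σ) (Fin σ) K) (P : Matrix (Fin m) (Fin m) (Polynomial K)) : Prop :=
  LinearIndependent (Polynomial K) (fun i => P i) ∧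
    ∀ q : Fin m → Polynomial K,
      IsInterpolant E M q ↔ q ∈ Submodule.span (Polynomial K) (Set.range fun i => P i)

/-!
Measure a submodule `N` of `K[X]^m` by its Hilbert function `D ↦ dim_K {p ∈ N | s-degree of p < D}`.
If `P` is `s`-reduced with `s`-row degrees `r`, no cancellation of leading terms can occur in a
combination of its rows (the predictable degree property), so the Hilbert function of its row space
is `D ↦ ∑ i, (D - r i)`. For the module of interpolants it is `D ↦ ∑ c, (D - (s c + dm c))`:
the minimal dependencies of the Krylov rows are interpolants whose leading matrix is triangular,
which gives `≥`, while `≤` holds because an interpolant involving only the monomials `X ^ d e_c`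
with `d < dm c` would be a dependency between independent Krylov rows. Such a sum of truncated
differences determines the multiset of the subtracted numbers, and nested submodules with equal
Hilbert functions coincide.
-/

section TruncatedDifferences

theorem sum_map_tsub_second_difference (A : Multiset ℕ) (a : ℕ) :
    (A.map (a + 1 - ·)).sum + (A.map (a - 1 - ·)).sum = 2 * (A.map (a - ·)).sum + A.count a := by
  induction A using Multiset.induction_on with
  | empty => simp
  | cons x A ih =>
    simp only [Multiset.map_cons, Multiset.sum_cons, Multiset.count_cons]
    split_ifs <;> omega

theorem multiset_eq_iff_sum_map_tsub_eq {A B : Multiset ℕ} :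
    A = B ↔ ∀ D, (A.map (D - ·)).sum = (B.map (D - ·)).sum := by
  refine ⟨fun h D => by rw [h], fun h => Multiset.ext.2 fun a => ?_⟩
  have hA := sum_map_tsub_second_difference A a
  have hB := sum_map_tsub_second_difference B a
  rw [h, h, h] at hA
  omega

theorem map_univ_eq_iff_sum_tsub_eq {α β : Type*} [Fintype α] [Fintype β] (f : α → ℕ) (g : β → ℕ) :
    Finset.univ.val.map f = Finset.univ.val.map g ↔ ∀ D, ∑ i, (D - f i) = ∑ i, (D - g i) := by
  simp only [multiset_eq_iff_sum_map_tsub_eq, Multiset.map_map, Function.comp_def, Finset.sum]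

end TruncatedDifferences

section DegreeFiltration

variable {R : Type*} [Semiring R] {ι κ : Type*}

variable (R) in
/-- The vectors of polynomials of `s`-degree less than `D`. The truncated subtraction forces the
`j`-th entry to vanish when `D ≤ s j`. -/
noncomputable def shiftedDegreeLT (s : ι → ℕ) (D : ℕ) : Submodule R (ι → R[X]) :=
  Submodule.pi Set.univ fun j => degreeLT R (D - s j)

/-- The vector of coefficients of `p` in `s`-degree exactly `D`. -/
def shiftedCoeff (s : ι → ℕ) (D : ℕ) (p : ι → R[X]) (j : ι) : R :=
  if s j ≤ D then (p j).coeff (D - s j) else 0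

/-- The `s`-leading matrix of `P` with respect to prescribed row degrees `r`; a row of `s`-degree
less than `r i` contributes a zero row. -/
def leadMatAt (s : ι → ℕ) (r : κ → ℕ) (P : Matrix κ ι R[X]) : Matrix κ ι R :=
  fun i => shiftedCoeff s (r i) (P i)

variable {s : ι → ℕ} {r : κ → ℕ} {D : ℕ} {p : ι → R[X]} {P : Matrix κ ι R[X]} {u : κ → R[X]}

theorem mem_shiftedDegreeLT : p ∈ shiftedDegreeLT R s D ↔ ∀ j, p j ∈ degreeLT R (D - s j) := by
  simp [shiftedDegreeLT]

theorem mem_shiftedDegreeLT_iff_coeff :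
    p ∈ shiftedDegreeLT R s D ↔ ∀ j k, D ≤ s j + k → (p j).coeff k = 0 := by
  simp only [mem_shiftedDegreeLT, mem_degreeLT, degree_lt_iff_coeff_zero, Nat.sub_le_iff_le_add']

theorem shiftedDegreeLT_mono : Monotone (shiftedDegreeLT R s) := fun _ _ h _ hp =>
  mem_shiftedDegreeLT.2 fun j =>
    degreeLT_mono (Nat.sub_le_sub_right h _) (mem_shiftedDegreeLT.1 hp j)

theorem shiftedDegreeLT_zero : shiftedDegreeLT R s 0 = ⊥ := by
  refine (Submodule.eq_bot_iff _).2 fun p hp => funext fun j => Polynomial.ext fun k => ?_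
  exact mem_shiftedDegreeLT_iff_coeff.1 hp j k (Nat.zero_le _)

theorem exists_mem_shiftedDegreeLT [Finite ι] (s : ι → ℕ) (p : ι → R[X]) :
    ∃ D, p ∈ shiftedDegreeLT R s D := by
  obtain ⟨D, hD⟩ := Finite.exists_le fun j => s j + (p j).natDegree
  refine ⟨D + 1, mem_shiftedDegreeLT_iff_coeff.2 fun j k hk => ?_⟩
  have := hD j
  exact coeff_eq_zero_of_natDegree_lt (by omega)

theorem mem_shiftedDegreeLT_iff_shiftedCoeff_eq_zero (hp : p ∈ shiftedDegreeLT R s (D + 1)) :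
    p ∈ shiftedDegreeLT R s D ↔ shiftedCoeff s D p = 0 := by
  rw [mem_shiftedDegreeLT_iff_coeff] at hp ⊢
  refine ⟨fun h => funext fun j => ?_, fun h j k hk => ?_⟩
  · by_cases hj : s j ≤ D
    · simpa [shiftedCoeff, hj] using h j (D - s j) (by omega)
    · simp [shiftedCoeff, hj]
  · rcases hk.eq_or_lt with rfl | hlt
    · simpa [shiftedCoeff] using congrFun h j
    · exact hp j k hlt

variable [Fintype κ]

theorem vecMul_mem_shiftedDegreeLT (hP : ∀ i, P i ∈ shiftedDegreeLT R s (r i + 1))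
    (hu : u ∈ shiftedDegreeLT R r D) : u ᵥ* P ∈ shiftedDegreeLT R s D := by
  rw [mem_shiftedDegreeLT_iff_coeff] at hu ⊢
  intro j k hk
  simp only [vecMul, dotProduct, finsetSum_coeff, coeff_mul]
  refine Finset.sum_eq_zero fun i _ => Finset.sum_eq_zero fun x hx => ?_
  rw [Finset.HasAntidiagonal.mem_antidiagonal] at hx
  by_cases h : D ≤ r i + x.1
  · rw [hu i _ h, zero_mul]
  · rw [mem_shiftedDegreeLT_iff_coeff.1 (hP i) j x.2 (by omega), mul_zero]

theorem coeff_mul_tsub_of_shifted_le {u p : R[X]} {s r D : ℕ} (hu : u ∈ degreeLT R (D + 1 - r))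
    (hp : p ∈ degreeLT R (r + 1 - s)) :
    (if s ≤ D then (u * p).coeff (D - s) else 0) =
      (if r ≤ D then u.coeff (D - r) else 0) * (if s ≤ r then p.coeff (r - s) else 0) := by
  simp only [mem_degreeLT, degree_lt_iff_coeff_zero] at hu hp
  by_cases hrD : r ≤ D
  · by_cases hsr : s ≤ r
    · rw [if_pos hrD, if_pos hsr, if_pos (hsr.trans hrD),
        show D - s = (D - r) + (r - s) by omega]
      apply coeff_mul_add_eq_of_natDegree_le <;> rw [natDegree_le_iff_coeff_eq_zero]
      · exact fun k hk => hu k (by omega)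
      · exact fun k hk => hp k (by omega)
    · obtain rfl : p = 0 := Polynomial.ext fun k => hp k (by omega)
      simp
  · obtain rfl : u = 0 := Polynomial.ext fun k => hu k (by omega)
    simp

theorem shiftedCoeff_vecMul (hP : ∀ i, P i ∈ shiftedDegreeLT R s (r i + 1))
    (hu : u ∈ shiftedDegreeLT R r (D + 1)) :
    shiftedCoeff s D (u ᵥ* P) = shiftedCoeff r D u ᵥ* leadMatAt s r P := by
  funext j
  have hterm (i : κ) := coeff_mul_tsub_of_shifted_le (mem_shiftedDegreeLT.1 hu i)
    (mem_shiftedDegreeLT.1 (hP i) j)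
  simp only [shiftedCoeff, leadMatAt, vecMul, dotProduct, ← hterm, finsetSum_coeff]
  split_ifs <;> simp

theorem mem_shiftedDegreeLT_of_vecMul_mem (hP : ∀ i, P i ∈ shiftedDegreeLT R s (r i + 1))
    (hL : LinearIndependent R (leadMatAt s r P).row) (h : u ᵥ* P ∈ shiftedDegreeLT R s D) :
    u ∈ shiftedDegreeLT R r D := by
  obtain ⟨N, hN⟩ := exists_mem_shiftedDegreeLT r u
  refine Nat.decreasingInduction' (P := fun n => u ∈ shiftedDegreeLT R r n)
    (fun n _ hDn hu => ?_) (le_max_left D N) (shiftedDegreeLT_mono (le_max_right D N) hN)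
  rw [mem_shiftedDegreeLT_iff_shiftedCoeff_eq_zero hu]
  refine vecMul_injective_iff.2 hL (?_ : _ ᵥ* _ = _ ᵥ* _)
  have huP : u ᵥ* P ∈ shiftedDegreeLT R s n := shiftedDegreeLT_mono hDn h
  rw [zero_vecMul, ← shiftedCoeff_vecMul hP hu,
    ← mem_shiftedDegreeLT_iff_shiftedCoeff_eq_zero (shiftedDegreeLT_mono n.le_succ huP)]
  exact huP

theorem vecMul_mem_shiftedDegreeLT_iff (hP : ∀ i, P i ∈ shiftedDegreeLT R s (r i + 1))
    (hL : LinearIndependent R (leadMatAt s r P).row) :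
    u ᵥ* P ∈ shiftedDegreeLT R s D ↔ u ∈ shiftedDegreeLT R r D :=
  ⟨mem_shiftedDegreeLT_of_vecMul_mem hP hL, vecMul_mem_shiftedDegreeLT hP⟩

end DegreeFiltration

section RowIndependence

variable {R : Type*} [Ring R] {ι κ : Type*} [Finite κ] {s : ι → ℕ} {r : κ → ℕ}
  {P : Matrix κ ι R[X]}

theorem linearIndependent_row_of_leadMatAt (hP : ∀ i, P i ∈ shiftedDegreeLT R s (r i + 1))
    (hL : LinearIndependent R (leadMatAt s r P).row) : LinearIndependent R[X] P.row := by
  cases nonempty_fintype κ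
  rw [← vecMul_injective_iff, ← coe_vecMulLinear, injective_iff_map_eq_zero]
  intro u hu
  have huP : u ᵥ* P ∈ shiftedDegreeLT R s 0 := by
    rw [← vecMulLinear_apply, hu]
    exact zero_mem _
  rwa [vecMul_mem_shiftedDegreeLT_iff hP hL, shiftedDegreeLT_zero, Submodule.mem_bot] at huP

end RowIndependence

section HilbertFunction

variable {K : Type*} [Field K] {ι κ : Type*} {s : ι → ℕ}

variable (K) in
/-- Coordinates on `shiftedDegreeLT K s D`. -/
noncomputable def shiftedDegreeLTEquiv (s : ι → ℕ) (D : ℕ) :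
    shiftedDegreeLT K s D ≃ₗ[K] ((j : ι) → Fin (D - s j) → K) where
  toFun p j := degreeLTEquiv K (D - s j) ⟨p.1 j, mem_shiftedDegreeLT.1 p.2 j⟩
  invFun q := ⟨fun j => (degreeLTEquiv K (D - s j)).symm (q j),
    mem_shiftedDegreeLT.2 fun _ => Subtype.coe_prop _⟩
  map_add' _ _ := rfl
  map_smul' _ _ := rfl
  left_inv p := by ext1; funext j; simp
  right_inv q := by funext j; simp

/-- The Hilbert function of `N` for the filtration by `s`-degree. -/
noncomputable def hilbertFun (s : ι → ℕ) (N : Submodule K[X] (ι → K[X])) (D : ℕ) : ℕ :=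
  Module.finrank K (N.restrictScalars K ⊓ shiftedDegreeLT K s D : Submodule K (ι → K[X]))

theorem hilbertFun_span_row [Fintype κ] {r : κ → ℕ} {P : Matrix κ ι K[X]}
    (hP : ∀ i, P i ∈ shiftedDegreeLT K s (r i + 1))
    (hL : LinearIndependent K (leadMatAt s r P).row) (D : ℕ) :
    hilbertFun s (Submodule.span K[X] (Set.range P.row)) D = ∑ i, (D - r i) := by
  have hinj : Function.Injective (P.vecMulLinear.restrictScalars K) :=
    vecMul_injective_iff.2 (linearIndependent_row_of_leadMatAt hP hL)
  have hmap : (Submodule.span K[X] (Set.range P.row)).restrictScalars K ⊓ shiftedDegreeLT K s D =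
      (shiftedDegreeLT K r D).map (P.vecMulLinear.restrictScalars K) := by
    rw [← range_vecMulLinear]
    ext q
    constructor
    · rintro ⟨⟨u, rfl⟩, hu⟩
      exact ⟨u, (vecMul_mem_shiftedDegreeLT_iff hP hL).1 hu, rfl⟩
    · rintro ⟨u, hu, rfl⟩
      exact ⟨⟨u, rfl⟩, (vecMul_mem_shiftedDegreeLT_iff hP hL).2 hu⟩
  rw [hilbertFun, hmap, ← (Submodule.equivMapOfInjective _ hinj _).finrank_eq,
    (shiftedDegreeLTEquiv K r D).finrank_eq, Module.finrank_pi_fintype]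
  simp

theorem hilbertFun_le_of_forall_degreeLT [Fintype ι] {N : Submodule K[X] (ι → K[X])}
    {t : ι → ℕ}
    (h : ∀ p ∈ N, (∀ j, p j ∈ degreeLT K (t j)) → p = 0) (D : ℕ) :
    hilbertFun s N D ≤ ∑ j, (D - (s j + t j)) := by
  let highCoeffs : (ι → K[X]) →ₗ[K] ((j : ι) → Fin (D - (s j + t j)) → K) :=
    LinearMap.pi fun j => LinearMap.pi fun k => lcoeff K (t j + k) ∘ₗ LinearMap.proj j
  have hinj : Function.Injective
      (highCoeffs.domRestrict (N.restrictScalars K ⊓ shiftedDegreeLT K s D)) := by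
    rw [injective_iff_map_eq_zero]
    rintro ⟨p, hpN, hpD⟩ hp
    refine Subtype.ext (h p hpN fun j => ?_)
    rw [mem_degreeLT, degree_lt_iff_coeff_zero]
    intro k hk
    by_cases hD : D ≤ s j + k
    · exact mem_shiftedDegreeLT_iff_coeff.1 hpD j k hD
    · have := congrFun (congrFun hp j) ⟨k - t j, by omega⟩
      simpa [highCoeffs, Nat.add_sub_cancel' hk] using this
  calc hilbertFun s N D ≤ Module.finrank K ((j : ι) → Fin (D - (s j + t j)) → K) :=
        LinearMap.finrank_le_finrank_of_injective hinj
    _ = ∑ j, (D - (s j + t j)) := by simp [Module.finrank_pi_fintype]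

variable [Finite ι] {N N' : Submodule K[X] (ι → K[X])}

instance finite_shiftedDegreeLT (s : ι → ℕ) (D : ℕ) : Module.Finite K (shiftedDegreeLT K s D) :=
  Module.Finite.equiv (shiftedDegreeLTEquiv K s D).symm

theorem hilbertFun_mono (h : N ≤ N') (D : ℕ) : hilbertFun s N D ≤ hilbertFun s N' D :=
  Submodule.finrank_mono (inf_le_inf_right _ h)

theorem eq_iff_hilbertFun_eq (s : ι → ℕ) (h : N ≤ N') :
    N = N' ↔ ∀ D, hilbertFun s N D = hilbertFun s N' D := by
  refine ⟨fun h _ => by rw [h], fun hH => le_antisymm h fun q hq => ?_⟩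
  obtain ⟨D, hD⟩ := exists_mem_shiftedDegreeLT s q
  have heq := Submodule.eq_of_le_of_finrank_eq (inf_le_inf_right (shiftedDegreeLT K s D)
    (show N.restrictScalars K ≤ N'.restrictScalars K from h)) (hH D)
  exact (heq.ge ⟨hq, hD⟩ : q ∈ N.restrictScalars K ⊓ shiftedDegreeLT K s D).1

end HilbertFunction

section Reduced

variable {K : Type*} [Field K] {k m : ℕ} {s : Fin m → ℕ} {P : Matrix (Fin k) (Fin m) K[X]}

theorem degree_add_le_rowDegW (i : Fin k) (j : Fin m) :
    (P i j).degree + (s j : WithBot ℕ) ≤ rowDegW s P i :=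
  Finset.le_sup (f := fun j => (P i j).degree + (s j : WithBot ℕ)) (Finset.mem_univ j)

theorem natDegree_add_le_of_rowDegW_eq {i : Fin k} {d : ℕ} (hd : rowDegW s P i = d) {j : Fin m}
    (h0 : P i j ≠ 0) : (P i j).natDegree + s j ≤ d := by
  have := degree_add_le_rowDegW (s := s) (P := P) i j
  rw [hd, degree_eq_natDegree h0] at this
  exact_mod_cast this

theorem mem_shiftedDegreeLT_of_rowDegW_eq {i : Fin k} {d : ℕ} (hd : rowDegW s P i = d) :
    P i ∈ shiftedDegreeLT K s (d + 1) := by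
  refine mem_shiftedDegreeLT_iff_coeff.2 fun j n hn => ?_
  by_contra hcoeff
  have h0 : P i j ≠ 0 := fun h0 => hcoeff (by simp [h0])
  have := natDegree_add_le_of_rowDegW_eq hd h0
  have := le_natDegree_of_ne_zero hcoeff
  omega

theorem leadMatAt_eq_leadMat {r : Fin k → ℕ} (hr : ∀ i, rowDegW s P i = r i) :
    leadMatAt s r P = leadMat s P := by
  funext i j
  by_cases h0 : P i j = 0
  · simp [leadMatAt, shiftedCoeff, leadMat, h0]
  have hle := natDegree_add_le_of_rowDegW_eq (hr i) h0
  have hiff : (P i j).degree + (s j : WithBot ℕ) = rowDegW s P i ↔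
      (P i j).natDegree + s j = r i := by
    rw [hr, degree_eq_natDegree h0]
    norm_cast
  rw [leadMatAt, shiftedCoeff, if_pos (by omega), leadMat, leadingCoeff]
  simp only [hiff]
  split_ifs with heq
  · rw [← heq, Nat.add_sub_cancel]
  · exact coeff_eq_zero_of_natDegree_lt (by omega)

theorem IsReducedS.linearIndependent_row_leadMat (h : IsReducedS s P) :
    LinearIndependent K (leadMat s P).row := by
  rw [linearIndependent_iff_card_eq_finrank_span, Set.finrank, ← rank_eq_finrank_span_row,
    Fintype.card_fin]
  exact h.symm

theorem IsReducedS.rowDegW_ne_bot (h : IsReducedS s P) (i : Fin k) : rowDegW s P i ≠ ⊥ := by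
  intro hi
  refine h.linearIndependent_row_leadMat.ne_zero i (funext fun j => ?_)
  have hdeg := degree_add_le_rowDegW (s := s) (P := P) i j
  rw [hi, le_bot_iff, WithBot.add_eq_bot] at hdeg
  have h0 : P i j = 0 := degree_eq_bot.1 (hdeg.resolve_right (WithBot.natCast_ne_bot _))
  simp [row, leadMat, h0]

theorem IsReducedS.exists_rowDegW_eq (h : IsReducedS s P) :
    ∃ r : Fin k → ℕ, ∀ i, rowDegW s P i = r i := by
  choose r hr using fun i => WithBot.ne_bot_iff_exists.1 (h.rowDegW_ne_bot i)
  exact ⟨r, fun i => (hr i).symm⟩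

end Reduced

section LinearRelations

theorem map_basis_mem_span_image_iff {K V W ι : Type*} [Field K] [AddCommGroup V] [Module K V]
    [AddCommGroup W] [Module K W] (b : Module.Basis ι K V) (f : V →ₗ[K] W) {i : ι} {S : Set ι}
    (hi : i ∉ S) :
    f (b i) ∈ Submodule.span K ((fun j => f (b j)) '' S) ↔
      ∃ p, f p = 0 ∧ b.repr p i ≠ 0 ∧ ∀ j, b.repr p j ≠ 0 → j ≠ i → j ∈ S := by
  rw [← Set.image_image, Submodule.span_image]
  constructor
  · rintro ⟨q, hq, hfq⟩
    have hqS (j : ι) (hj : b.repr q j ≠ 0) : j ∈ S :=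
      b.mem_span_image.1 hq (Finsupp.mem_support_iff.2 hj)
    have hqi : b.repr q i = 0 := by_contra fun h => hi (hqS i h)
    refine ⟨b i - q, by simp [hfq], by simp [hqi], fun j hj hji => hqS j ?_⟩
    simpa [Finsupp.single_eq_of_ne hji] using hj
  · rintro ⟨p, hfp, hpi, hpS⟩
    refine ⟨b i - (b.repr p i)⁻¹ • p, b.mem_span_image.2 fun j hj => ?_, by simp [hfp]⟩
    rw [Finset.mem_coe, Finsupp.mem_support_iff] at hj
    have hji : j ≠ i := by
      rintro rfl
      simp [hpi] at hj
    refine hpS j (fun h => hj ?_) hji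
    simp [Finsupp.single_eq_of_ne hji, h]

variable {R ι : Type*} [Semiring R] [Fintype ι]

variable (R ι) in
/-- The basis of the vectors of polynomials formed by the `X ^ d e_c`, indexed by `(c, d)`. -/
noncomputable def monomialBasis : Module.Basis (ι × ℕ) R (ι → R[X]) :=
  (Pi.basis fun _ : ι => basisMonomials R).reindex (Equiv.sigmaEquivProd ι ℕ)

theorem monomialBasis_apply [DecidableEq ι] (y : ι × ℕ) :
    monomialBasis R ι y = Pi.single y.1 (X ^ y.2) := by
  simp [monomialBasis, Pi.basis_apply, X_pow_eq_monomial]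

theorem monomialBasis_repr_apply (p : ι → R[X]) (y : ι × ℕ) :
    (monomialBasis R ι).repr p y = (p y.1).coeff y.2 := by
  simp only [monomialBasis, Module.Basis.repr_reindex_apply, Equiv.sigmaEquivProd_symm_apply,
    Pi.basis_repr]
  rfl

end LinearRelations

section Pivot

variable {K : Type*} [Field K] {m : ℕ} {s : Fin m → ℕ}

/-- The `s`-leading term of `p`, for the order in which the Krylov rows are enumerated, is in degree
`d` of the entry `c`. -/
def HasPivot (s : Fin m → ℕ) (p : Fin m → K[X]) (c : Fin m) (d : ℕ) : Prop :=
  (p c).coeff d ≠ 0 ∧ ∀ j k, (p j).coeff k ≠ 0 → (j, k) ≠ (c, d) → keyLt s (j, k) (c, d)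

theorem keyLt_irrefl (x : Fin m × ℕ) : ¬ keyLt s x x := by
  simp [keyLt]

theorem keyLt_of_toLex_le {x y : Fin m × ℕ}
    (h : toLex (s x.1 + x.2, x.1) ≤ toLex (s y.1 + y.2, y.1)) (hne : x ≠ y) : keyLt s x y := by
  rcases Prod.Lex.toLex_le_toLex.1 h with hlt | ⟨heq, hle⟩
  · exact Or.inl hlt
  · refine Or.inr ⟨heq, lt_of_le_of_ne hle fun hfst => hne (Prod.ext hfst ?_)⟩
    simp only [hfst] at heq
    exact Nat.add_left_cancel heq

theorem exists_hasPivot (s : Fin m → ℕ) {p : Fin m → K[X]} (hp : p ≠ 0) :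
    ∃ c d, HasPivot s p c d := by
  have hne : ((monomialBasis K (Fin m)).repr p).support.Nonempty := by
    simpa [Finsupp.support_nonempty_iff] using hp
  obtain ⟨⟨c, d⟩, hcd, hmax⟩ :=
    Finset.exists_max_image _ (fun y => toLex (s y.1 + y.2, y.1)) hne
  simp only [Finsupp.mem_support_iff, monomialBasis_repr_apply] at hcd hmax
  exact ⟨c, d, hcd, fun j k hjk => keyLt_of_toLex_le (hmax (j, k) hjk)⟩

theorem hasPivot_single {f : K[X]} (hf : f ≠ 0) (s : Fin m → ℕ) (c : Fin m) :
    HasPivot s (Pi.single c f) c f.natDegree := by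
  refine ⟨by simpa using hf, fun j k hjk hne => ?_⟩
  obtain rfl : j = c := by
    by_contra hjc
    simp [hjc] at hjk
  rw [Pi.single_eq_same] at hjk
  have hk : k ≠ f.natDegree := fun hk => hne (by rw [hk])
  exact Or.inl (Nat.add_lt_add_left (lt_of_le_of_ne (le_natDegree_of_ne_zero hjk) hk) _)

namespace HasPivot

variable {p : Fin m → K[X]} {c : Fin m} {d : ℕ}

theorem mem_shiftedDegreeLT (h : HasPivot s p c d) : p ∈ shiftedDegreeLT K s (s c + d + 1) := by
  refine mem_shiftedDegreeLT_iff_coeff.2 fun j k hk => by_contra fun hjk => ?_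
  have hne : (j, k) ≠ (c, d) := by
    rintro ⟨⟩
    omega
  rcases h.2 j k hjk hne with hlt | ⟨heq, -⟩ <;> simp only at * <;> omega

theorem shiftedCoeff_self_ne_zero (h : HasPivot s p c d) : shiftedCoeff s (s c + d) p c ≠ 0 := by
  simpa [shiftedCoeff] using h.1

theorem shiftedCoeff_eq_zero_of_lt (h : HasPivot s p c d) {j : Fin m} (hcj : c < j) :
    shiftedCoeff s (s c + d) p j = 0 := by
  rw [shiftedCoeff, ite_eq_right_iff]
  intro hsj
  by_contra hcoeff
  rcases h.2 j _ hcoeff (fun h => hcj.ne' (congrArg Prod.fst h)) with hlt | ⟨-, hjc⟩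
  · simp only at hlt
    omega
  · exact lt_asymm hcj hjc

end HasPivot

theorem linearIndependent_row_leadMatAt_of_hasPivot {t : Fin m → ℕ}
    {P : Matrix (Fin m) (Fin m) K[X]} (hP : ∀ c, HasPivot s (P c) c (t c)) :
    LinearIndependent K (leadMatAt s (fun c => s c + t c) P).row := by
  have htri : (leadMatAt s (fun c => s c + t c) P).IsLowerTriangular := fun c _ hcj =>
    (hP c).shiftedCoeff_eq_zero_of_lt hcj
  refine linearIndependent_rows_of_isUnit ((isUnit_iff_isUnit_det _).2 ?_)
  rw [det_of_isLowerTriangular _ htri, isUnit_iff_ne_zero, Finset.prod_ne_zero_iff]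
  exact fun c _ => (hP c).shiftedCoeff_self_ne_zero

end Pivot

section Interpolants

variable {R ι n : Type*} [CommSemiring R] [Fintype ι] [Fintype n] [DecidableEq n]

/-- The `R`-linear map sending `X ^ d e_c` to the row `(c, d)` of the Krylov matrix of `(E, M)`. -/
noncomputable def krylovMap (E : Matrix ι n R) (M : Matrix n n R) : (ι → R[X]) →ₗ[R] (n → R) where
  toFun p := ∑ c, E c ᵥ* aeval M (p c)
  map_add' p q := by simp [vecMul_add, Finset.sum_add_distrib]
  map_smul' a p := by simp [vecMul_smul, Finset.smul_sum]

variable {E : Matrix ι n R} {M : Matrix n n R}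

theorem krylovMap_apply (p : ι → R[X]) : krylovMap E M p = ∑ c, E c ᵥ* aeval M (p c) := rfl

theorem krylovMap_single [DecidableEq ι] (c : ι) (f : R[X]) :
    krylovMap E M (Pi.single c f) = E c ᵥ* aeval M f := by
  rw [krylovMap_apply, Finset.sum_eq_single_of_mem c (Finset.mem_univ c), Pi.single_eq_same]
  intro j _ hjc
  simp [hjc]

theorem krylovMap_polynomial_smul (a : R[X]) (p : ι → R[X]) :
    krylovMap E M (a • p) = krylovMap E M p ᵥ* aeval M a := by
  simp only [krylovMap_apply, sum_vecMul, vecMul_vecMul, ← map_mul, Pi.smul_apply, smul_eq_mul,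
    mul_comm a]

variable (E M) in
/-- The `R[X]`-module of interpolants for `(E, M)`. -/
noncomputable def interpolants : Submodule R[X] (ι → R[X]) where
  __ := (krylovMap E M).ker.toAddSubmonoid
  smul_mem' a p hp := (krylovMap_polynomial_smul a p).trans <| by
    rw [show krylovMap E M p = 0 from hp, zero_vecMul]

theorem mem_interpolants {p : ι → R[X]} : p ∈ interpolants E M ↔ krylovMap E M p = 0 := Iff.rfl

end Interpolants

section MinimalDegree

variable {K : Type*} [Field K] {m σ δ : ℕ} {E : Matrix (Fin m) (Fin σ) K}
  {M : Matrix (Fin σ) (Fin σ) K} {s : Fin m → ℕ} {c : Fin m} {d : ℕ}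

theorem isInterpolant_iff_mem_interpolants {p : Fin m → K[X]} :
    IsInterpolant E M p ↔ p ∈ interpolants E M := Iff.rfl

theorem depEarlier_iff_exists_hasPivot :
    DepEarlier E M s δ c d ↔ ∃ p ∈ interpolants E M, HasPivot s p c d ∧
      ∀ j k, (p j).coeff k ≠ 0 → (j, k) ≠ (c, d) → k ≤ δ := by
  have hrow (y : Fin m × ℕ) : krylovMap E M (monomialBasis K (Fin m) y) = E y.1 ᵥ* M ^ y.2 := by
    rw [monomialBasis_apply, krylovMap_single, map_pow, aeval_X]
  have hcd : (c, d) ∉ {y : Fin m × ℕ | y.2 ≤ δ ∧ keyLt s y (c, d)} :=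
    fun h => keyLt_irrefl _ h.2
  have hiff := map_basis_mem_span_image_iff (monomialBasis K (Fin m)) (krylovMap E M) hcd
  simp only [hrow, monomialBasis_repr_apply, Prod.forall, Set.mem_ofPred_eq] at hiff
  rw [DepEarlier, hiff]
  simp only [mem_interpolants, HasPivot, and_assoc]
  grind

namespace IsMinDeg

variable {t : Fin m → ℕ}

theorem not_hasPivot_of_lt (ht : IsMinDeg E M s δ t) {p : Fin m → K[X]}
    (hp : p ∈ interpolants E M) (hdeg : ∀ j, (p j).natDegree ≤ δ) (hd : d < t c) :
    ¬ HasPivot s p c d := fun hpiv =>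
  (ht c).2 d hd <| depEarlier_iff_exists_hasPivot.2
    ⟨p, hp, hpiv, fun j _ hjk _ => (le_natDegree_of_ne_zero hjk).trans (hdeg j)⟩

theorem le_natDegree_minpoly (ht : IsMinDeg E M s δ t) (hδ : (minpoly K M).natDegree ≤ δ)
    (c : Fin m) : t c ≤ (minpoly K M).natDegree := by
  refine not_lt.1 fun hlt => ht.not_hasPivot_of_lt (p := Pi.single c (minpoly K M)) ?_ ?_ hlt
    (hasPivot_single (minpoly.ne_zero (Matrix.isIntegral M)) s c)
  · rw [mem_interpolants, krylovMap_single, minpoly.aeval, vecMul_zero]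
  · intro j
    rcases eq_or_ne j c with rfl | hjc
    · simpa using hδ
    · simp [hjc]

theorem eq_zero_of_mem_interpolants (ht : IsMinDeg E M s δ t)
    (hδ : (minpoly K M).natDegree ≤ δ) {p : Fin m → K[X]} (hp : p ∈ interpolants E M)
    (hdeg : ∀ j, p j ∈ degreeLT K (t j)) : p = 0 := by
  have hlt (j : Fin m) (k : ℕ) (hjk : (p j).coeff k ≠ 0) : k < t j :=
    WithBot.coe_lt_coe.1 ((le_degree_of_ne_zero hjk).trans_lt (mem_degreeLT.1 (hdeg j)))
  by_contra hne
  obtain ⟨c, d, hpiv⟩ := exists_hasPivot s hne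
  refine ht.not_hasPivot_of_lt hp (fun j => ?_) (hlt c d hpiv.1) hpiv
  exact natDegree_le_iff_degree_le.2 <| (mem_degreeLT.1 (hdeg j)).le.trans <|
    WithBot.coe_le_coe.2 ((ht.le_natDegree_minpoly hδ j).trans hδ)

theorem le_hilbertFun_interpolants (ht : IsMinDeg E M s δ t) (D : ℕ) :
    ∑ c, (D - (s c + t c)) ≤ hilbertFun s (interpolants E M) D := by
  choose P hPmem hPpiv _ using fun c => depEarlier_iff_exists_hasPivot.1 (ht c).1
  calc ∑ c, (D - (s c + t c)) = hilbertFun s (Submodule.span K[X] (Set.range P)) D :=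
        (hilbertFun_span_row (fun c => (hPpiv c).mem_shiftedDegreeLT)
          (linearIndependent_row_leadMatAt_of_hasPivot hPpiv) D).symm
    _ ≤ hilbertFun s (interpolants E M) D :=
        hilbertFun_mono (Submodule.span_le.2 (Set.range_subset_iff.2 hPmem)) D

theorem hilbertFun_interpolants (ht : IsMinDeg E M s δ t)
    (hδ : (minpoly K M).natDegree ≤ δ) (D : ℕ) :
    hilbertFun s (interpolants E M) D = ∑ c, (D - (s c + t c)) :=
  le_antisymm
    (hilbertFun_le_of_forall_degreeLT (fun _ => ht.eq_zero_of_mem_interpolants hδ) D)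
    (ht.le_hilbertFun_interpolants D)

end IsMinDeg

theorem isInterpBasis_iff_span_eq {P : Matrix (Fin m) (Fin m) K[X]}
    (hP : LinearIndependent K[X] P.row) :
    IsInterpBasis E M P ↔ Submodule.span K[X] (Set.range P.row) = interpolants E M := by
  refine (and_iff_right hP).trans ⟨fun h => Submodule.ext fun q => (h q).symm, fun h q => ?_⟩
  exact isInterpolant_iff_mem_interpolants.trans (Submodule.ext_iff.1 h q).symm

end MinimalDegree

/-- an `s`-reduced matrix `P₁` whose rows are interpolants for `(E,M)` is
an interpolation basis iff the multiset of its `s`-row degrees equals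
`{s_1 + δ_1, …, s_m + δ_m}`, where `(δ_1,…,δ_m)` is the `s`-minimal degree. -/
theorem isInterpBasis_iff_rowDeg_multiset_eq
    {K : Type*} [Field K] {m σ δ : ℕ}
    (E : Matrix (Fin m) (Fin σ) K) (M : Matrix (Fin σ) (Fin σ) K) (s : Fin m → ℕ)
    (hδ : (minpoly K M).natDegree ≤ δ)
    (dm : Fin m → ℕ) (hdm : IsMinDeg E M s δ dm)
    (P₁ : Matrix (Fin m) (Fin m) (Polynomial K))
    (hred : IsReducedS s P₁) (hrows : ∀ i, IsInterpolant E M (P₁ i)) :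
    IsInterpBasis E M P₁ ↔
      (Finset.univ.val.map fun i => rowDegW s P₁ i) =
        (Finset.univ.val.map fun c : Fin m => ((s c + dm c : ℕ) : WithBot ℕ)) := by
  obtain ⟨r, hr⟩ := hred.exists_rowDegW_eq
  have hP (i : Fin m) : P₁ i ∈ shiftedDegreeLT K s (r i + 1) :=
    mem_shiftedDegreeLT_of_rowDegW_eq (hr i)
  have hL : LinearIndependent K (leadMatAt s r P₁).row :=
    leadMatAt_eq_leadMat hr ▸ hred.linearIndependent_row_leadMat
  have hspan : Submodule.span K[X] (Set.range P₁.row) ≤ interpolants E M :=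
    Submodule.span_le.2 <| Set.range_subset_iff.2 fun i =>
      isInterpolant_iff_mem_interpolants.1 (hrows i)
  have hcast (f : Fin m → ℕ) : (Finset.univ.val.map fun i => (f i : WithBot ℕ)) =
      (Finset.univ.val.map f).map WithBot.some := (Multiset.map_map _ _ _).symm
  rw [isInterpBasis_iff_span_eq (linearIndependent_row_of_leadMatAt hP hL),
    eq_iff_hilbertFun_eq s hspan]
  simp only [hilbertFun_span_row hP hL, hdm.hilbertFun_interpolants hδ, hr]
  rw [hcast, hcast, (Multiset.map_injective WithBot.coe_injective).eq_iff,
    map_univ_eq_iff_sum_tsub_eq]
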